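/- For l ∈ ℕ, l ≥ 1, let K_l : [0,∞) → [0,1] be the folding map K_l(x) = lx − 2i on [2i/l, (2i+1)/l] and K_l(x) = −lx + 2i on [(2i−1)/l, 2i/l]. Let p ∈ L¹[0,∞) be any probability density (p ≥ 0, ∫_{[0,∞)} p = 1), and let d_l be the Radon–Nikodym derivative with respect to Lebesgue measure of the pushforward under K_l of the measure with density p. Then ∫_{[0,1]} |d_l(x) − 1| dx → 0 as l → ∞. -/

import Mathlib

open MeasureTheory Filter Topology

/-- The folding map `K_l : [0,∞) → [0,1]`, `K_l(x) = lx − 2i` on `[2i/l,(2i+1)/l]`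
and `K_l(x) = −lx + 2i` on `[(2i−1)/l, 2i/l]`; equivalently
`K_l(x) = 1 − |((lx) mod 2) − 1|`. -/
noncomputable def foldMap (l : ℕ) (x : ℝ) : ℝ :=
  1 - |2 * Int.fract ((l : ℝ) * x / 2) - 1|

/-!
Let `f` be the density of a finite measure `μ`. By duality, the `L¹[0,1]` distance from `d_l` to the
constant `c = μ(ℝ)` is the supremum over measurable `|g| ≤ 1` of `∫ g(K_l x) f(x) dx - c ∫₀¹ g`.
The function `g ∘ K_l` has period `2 / l` and mean `∫₀¹ g`, so averaging `x ↦ g(K_l(x - s))` over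
`0 ≤ s ≤ 2 / l` turns the first integral into the second term. Moving the translation onto `f`,
the cost of this averaging is at most the supremum of `‖f(s + ·) - f‖₁` over `0 < s ≤ 2 / l`, which
tends to `0` because translation is continuous in `L¹`.
-/

section Density

lemma measurable_coe_sign : Measurable fun x : ℝ => (SignType.sign x : ℝ) := by
  simp only [sign_apply, apply_ite (fun a : SignType => (a : ℝ))]
  exact .ite measurableSet_Ioi measurable_const
    (.ite measurableSet_Iio measurable_const measurable_const)

lemma abs_coe_sign_le_one (x : ℝ) : |(SignType.sign x : ℝ)| ≤ 1 := by
  rcases SignType.trichotomy (SignType.sign x) with h | h | h <;> simp [h]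

variable {α : Type*} [MeasurableSpace α]

lemma setIntegral_abs_rnDeriv_sub_le_of_forall_abs_le_one {ν m : Measure α} [IsFiniteMeasure ν]
    [ν.HaveLebesgueDecomposition m] (hν : ν ≪ m) {s : Set α} (hs : MeasurableSet s)
    (hms : m s ≠ ⊤) {c ε : ℝ}
    (hε : ∀ g : α → ℝ, Measurable g → (∀ x, |g x| ≤ 1) →
      (∫ x, g x ∂ν) - c * ∫ x in s, g x ∂m ≤ ε) :
    ∫ x in s, |(ν.rnDeriv m x).toReal - c| ∂m ≤ ε := by
  set d : α → ℝ := fun x => (ν.rnDeriv m x).toReal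
  have hd : Measurable d := (ν.measurable_rnDeriv m).ennreal_toReal
  set σ : α → ℝ := fun x => SignType.sign (d x - c)
  set g : α → ℝ := s.indicator σ with hg_def
  have hg : Measurable g := (measurable_coe_sign.comp (hd.sub_const c)).indicator hs
  have hg1 (x : α) : |g x| ≤ 1 :=
    (norm_indicator_le_norm_self σ x).trans (abs_coe_sign_le_one _)
  have habs : Set.EqOn (fun x => |d x - c|) (fun x => d x * g x - c * g x) s := fun x hx => by
    simp only [hg_def, Set.indicator_of_mem hx, ← sub_mul]
    rw [← sign_mul_self, mul_comm]
  have hdg : Integrable (fun x => d x * g x) m :=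
    Measure.integrable_toReal_rnDeriv.mul_bdd (c := 1) hg.aestronglyMeasurable (.of_forall hg1)
  have hgs : IntegrableOn g s m :=
    .of_bound hms.lt_top hg.aestronglyMeasurable 1 (.of_forall hg1)
  have hpair : ∫ x in s, d x * g x ∂m = ∫ x, g x ∂ν := by
    rw [setIntegral_eq_integral_of_forall_compl_eq_zero fun x hx => by simp [g, hx]]
    exact integral_rnDeriv_smul hν
  rw [setIntegral_congr_fun hs habs, integral_sub hdg.integrableOn (hgs.const_mul c), hpair,
    integral_const_mul]
  exact hε g hg hg1

lemma isProbabilityMeasure_withDensity_ofReal {μ : Measure α} {s : Set α} {p : α → ℝ}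
    (hpos : 0 ≤ᵐ[μ] p) (hsupp : ∀ x ∉ s, p x = 0) (hint : IntegrableOn p s μ)
    (hnorm : ∫ x in s, p x ∂μ = 1) :
    IsProbabilityMeasure (μ.withDensity fun x => ENNReal.ofReal (p x)) := by
  have hp : Integrable p μ :=
    (integrableOn_iff_integrable_of_support_subset
      fun x hx => not_not.1 fun hxs => hx (hsupp x hxs)).1 hint
  rw [setIntegral_eq_integral_of_forall_compl_eq_zero hsupp] at hnorm
  constructor
  rw [withDensity_apply _ .univ, setLIntegral_univ, ← ofReal_integral_eq_lintegral_ofReal hp hpos,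
    hnorm, ENNReal.ofReal_one]

end Density

lemma tendsto_integral_norm_vadd_sub {X M E : Type*}
    [TopologicalSpace X] [R1Space X] [MeasurableSpace X] [BorelSpace X]
    [AddMonoid M] [TopologicalSpace M] [MeasurableSpace M] [OpensMeasurableSpace M]
    [AddAction M X] [ContinuousVAdd M X] [NormedAddCommGroup E]
    {μ : Measure X} [IsLocallyFiniteMeasure μ] [μ.InnerRegularCompactLTTop]
    [VAddInvariantMeasure M X μ] {f : X → E} (hf : Integrable f μ) :
    Tendsto (fun c : M => ∫ x, ‖f (c +ᵥ x) - f x‖ ∂μ) (𝓝 0) (𝓝 0) := by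
  have : Fact ((1 : ENNReal) ≠ ⊤) := ⟨ENNReal.one_ne_top⟩
  have hf' : MemLp f 1 μ := memLp_one_iff_integrable.2 hf
  have hcont : Continuous fun c : M => DomAddAct.mk c +ᵥ hf'.toLp f :=
    DomAddAct.continuous_mk.vadd continuous_const
  have hlim : Tendsto (fun c : M => dist (DomAddAct.mk c +ᵥ hf'.toLp f) (hf'.toLp f))
      (𝓝 0) (𝓝 0) :=
    tendsto_iff_dist_tendsto_zero.1 (by simpa using hcont.tendsto 0)
  refine hlim.congr fun c => ?_
  rw [DomAddAct.mk_vadd_toLp, L1.dist_eq_integral_dist]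
  refine integral_congr_ae ?_
  filter_upwards [MemLp.coeFn_toLp (hf'.comp_measurePreserving (measurePreserving_vadd c μ)),
    hf'.coeFn_toLp] with x hcx hx
  rw [hx, dist_eq_norm]
  exact congrArg (‖· - f x‖) hcx

section PeriodicAverage

variable {E : Type*} [NormedAddCommGroup E] [NormedSpace ℝ E] {G : ℝ → ℝ} {f : ℝ → E} {C T : ℝ}

lemma integrable_smul_comp_sub (hG : Measurable G) (hGC : ∀ x, |G x| ≤ C)
    (hf : Integrable f) (a b : ℝ) :
    Integrable (Function.uncurry fun s x => G (x - s) • f x)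
      ((volume.restrict (Set.uIoc a b)).prod volume) :=
  have : IsFiniteMeasure (volume.restrict (Set.uIoc a b)) :=
    inferInstanceAs (IsFiniteMeasure (volume.restrict (Set.Ioc _ _)))
  (hf.comp_snd _).bdd_smul C
    (hG.comp (measurable_snd.sub measurable_fst)).aestronglyMeasurable
    (.of_forall fun _ => hGC _)

lemma intervalIntegral_integral_smul_comp_sub [CompleteSpace E] (hG : Measurable G)
    (hGC : ∀ x, |G x| ≤ C) (hGT : Function.Periodic G T) (hf : Integrable f) :
    ∫ s in 0..T, ∫ x, G (x - s) • f x = (∫ s in 0..T, G s) • ∫ x, f x := by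
  have hmean (x : ℝ) : ∫ s in 0..T, G (x - s) = ∫ s in 0..T, G s := by
    rw [intervalIntegral.integral_comp_sub_left]
    simpa using hGT.intervalIntegral_add_eq (x - T) 0
  rw [intervalIntegral_integral_swap (integrable_smul_comp_sub hG hGC hf _ _)]
  simp_rw [intervalIntegral.integral_smul_const, hmean, integral_smul]

lemma norm_integral_smul_comp_sub_sub_le (hG : Measurable G) (hGC : ∀ x, |G x| ≤ C)
    (hf : Integrable f) (s : ℝ) :
    ‖(∫ x, G (x - s) • f x) - ∫ x, G x • f x‖ ≤ C * ∫ x, ‖f (s + x) - f x‖ := by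
  have hfs : Integrable fun x => f (s + x) := hf.comp_add_left s
  have hsmul {h : ℝ → E} (hh : Integrable h) : Integrable fun x => G x • h x :=
    hh.bdd_smul C hG.aestronglyMeasurable (.of_forall hGC)
  have hshift : ∫ x, G (x - s) • f x = ∫ x, G x • f (s + x) := by
    rw [← integral_add_left_eq_self _ s]
    simp only [add_sub_cancel_left]
  rw [hshift, ← integral_sub (hsmul hfs) (hsmul hf), ← integral_const_mul]
  refine norm_integral_le_of_norm_le ((hfs.sub hf).norm.const_mul C) (.of_forall fun x => ?_)
  rw [← smul_sub, norm_smul]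
  exact mul_le_mul_of_nonneg_right (hGC x) (norm_nonneg _)

lemma norm_integral_smul_sub_intervalAverage_smul_le [CompleteSpace E] (hG : Measurable G)
    (hGC : ∀ x, |G x| ≤ C) (hGT : Function.Periodic G T) (hT : 0 < T) (hf : Integrable f) {ε : ℝ}
    (hε : ∀ s ∈ Set.Ioc 0 T, ∫ x, ‖f (s + x) - f x‖ ≤ ε) :
    ‖(∫ x, G x • f x) - (⨍ s in 0..T, G s) • ∫ x, f x‖ ≤ C * ε := by
  have hC : 0 ≤ C := (abs_nonneg _).trans (hGC 0)
  have hclose : ∀ s ∈ Set.uIoc 0 T,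
      ‖(∫ x, G (x - s) • f x) - ∫ x, G x • f x‖ ≤ C * ε := fun s hs =>
    (norm_integral_smul_comp_sub_sub_le hG hGC hf s).trans
      (mul_le_mul_of_nonneg_left (hε s (Set.uIoc_of_le hT.le ▸ hs)) hC)
  have hint : IntervalIntegrable (fun s => ∫ x, G (x - s) • f x) volume 0 T :=
    intervalIntegrable_iff.2 (integrable_smul_comp_sub hG hGC hf _ _).integral_prod_left
  have hbound := intervalIntegral.norm_integral_le_of_norm_le_const hclose
  rw [intervalIntegral.integral_sub hint intervalIntegrable_const,
    intervalIntegral_integral_smul_comp_sub hG hGC hGT hf, intervalIntegral.integral_const,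
    sub_zero] at hbound
  have hscale : (⨍ s in 0..T, G s) • (∫ x, f x) - ∫ x, G x • f x =
      T⁻¹ • ((∫ s in 0..T, G s) • (∫ x, f x) - T • ∫ x, G x • f x) := by
    rw [interval_average_eq, sub_zero, smul_sub, inv_smul_smul₀ hT.ne', smul_assoc]
  rw [norm_sub_rev, hscale, norm_smul, norm_inv, Real.norm_of_nonneg hT.le,
    inv_mul_le_iff₀ hT, mul_comm T]
  rwa [abs_of_pos hT] at hbound

end PeriodicAverage

lemma quasiMeasurePreserving_of_forall_exists_eq {α β ι : Type*} [MeasurableSpace α]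
    [MeasurableSpace β] [Countable ι] {μ : Measure α} {ν : Measure β} {f : α → β} {F : ι → α → β}
    (hf : Measurable f)
    (hF : ∀ i, Measure.QuasiMeasurePreserving (F i) μ ν) (h : ∀ x, ∃ i, f x = F i x) :
    Measure.QuasiMeasurePreserving f μ ν := by
  refine ⟨hf, .mk fun N hN hN0 => ?_⟩
  have hcover : f ⁻¹' N ⊆ ⋃ i, F i ⁻¹' N := fun x hx => by
    obtain ⟨i, hi⟩ := h x
    exact Set.mem_iUnion.2 ⟨i, by rwa [Set.mem_preimage, ← hi]⟩
  rw [Measure.map_apply hf hN]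
  exact measure_mono_null hcover (measure_iUnion_null fun i => (hF i).preimage_null hN0)

lemma quasiMeasurePreserving_const_mul_add {a : ℝ} (ha : a ≠ 0) (b : ℝ) :
    Measure.QuasiMeasurePreserving fun x : ℝ => a * x + b :=
  (measurePreserving_add_right volume b).quasiMeasurePreserving.comp
    (Measure.quasiMeasurePreserving_smul volume ha)

section FoldMap

variable {l : ℕ}

lemma measurable_foldMap (l : ℕ) : Measurable (foldMap l) := by
  have hfract : Measurable fun x : ℝ => Int.fract ((l : ℝ) * x / 2) :=
    measurable_fract.comp (by fun_prop)
  exact ((hfract.const_mul 2).sub_const 1).abs.const_sub 1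

lemma periodic_foldMap (hl : 0 < l) : Function.Periodic (foldMap l) (2 / l) := fun x => by
  have hshift : (l : ℝ) * (x + 2 / l) / 2 = l * x / 2 + 1 := by field_simp
  rw [foldMap, foldMap, hshift, Int.fract_add_one]

lemma foldMap_eq_foldMap_one_mul (l : ℕ) (x : ℝ) : foldMap l x = foldMap 1 (l * x) := by
  simp [foldMap]

lemma exists_foldMap_eq (l : ℕ) (x : ℝ) :
    ∃ (u : ℤˣ) (n : ℤ), foldMap l x = (u : ℤ) * l * x + n := by
  rcases abs_cases (2 * Int.fract ((l : ℝ) * x / 2) - 1) with ⟨h, -⟩ | ⟨h, -⟩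
  · refine ⟨-1, 2 + 2 * ⌊(l : ℝ) * x / 2⌋, ?_⟩
    rw [foldMap, h, Int.fract]
    push_cast
    ring
  · refine ⟨1, -(2 * ⌊(l : ℝ) * x / 2⌋), ?_⟩
    rw [foldMap, h, Int.fract]
    push_cast
    ring

lemma quasiMeasurePreserving_foldMap (hl : 0 < l) :
    Measure.QuasiMeasurePreserving (foldMap l) := by
  refine quasiMeasurePreserving_of_forall_exists_eq
    (F := fun (i : ℤˣ × ℤ) x => ((i.1 : ℤ) : ℝ) * l * x + (i.2 : ℝ))
    (measurable_foldMap l) (fun i => ?_) fun x => ?_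
  · exact quasiMeasurePreserving_const_mul_add
      (mul_ne_zero (Int.cast_ne_zero.2 i.1.ne_zero) (by positivity)) i.2
  · obtain ⟨u, n, h⟩ := exists_foldMap_eq l x
    exact ⟨(u, n), h⟩

lemma foldMap_one_of_mem_Icc {t : ℝ} (ht : t ∈ Set.Icc 0 1) : foldMap 1 t = t := by
  have hfract : Int.fract (t / 2) = t / 2 :=
    Int.fract_eq_self.2 ⟨by linarith [ht.1], by linarith [ht.2]⟩
  rw [foldMap, Nat.cast_one, one_mul, hfract, abs_of_nonpos (by linarith [ht.2])]
  ring

lemma foldMap_one_of_mem_Ico {t : ℝ} (ht : t ∈ Set.Ico 1 2) : foldMap 1 t = 2 - t := by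
  have hfract : Int.fract (t / 2) = t / 2 :=
    Int.fract_eq_self.2 ⟨by linarith [ht.1], by linarith [ht.2]⟩
  rw [foldMap, Nat.cast_one, one_mul, hfract, abs_of_nonneg (by linarith [ht.1])]
  ring

variable {E : Type*} [NormedAddCommGroup E] [NormedSpace ℝ E] {g : ℝ → E}

lemma integral_comp_foldMap_one (hg : IntervalIntegrable g volume 0 1) :
    ∫ t in 0..2, g (foldMap 1 t) = (2 : ℝ) • ∫ x in 0..1, g x := by
  have hleft : Set.EqOn g (fun t => g (foldMap 1 t)) (Set.uIoo 0 1) := fun t ht => by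
    rw [Set.uIoo_of_le zero_le_one] at ht
    simp only [foldMap_one_of_mem_Icc (Set.Ioo_subset_Icc_self ht)]
  have hright : Set.EqOn (fun t => g (2 - t)) (fun t => g (foldMap 1 t)) (Set.uIoo 1 2) :=
    fun t ht => by
      rw [Set.uIoo_of_le one_le_two] at ht
      simp only [foldMap_one_of_mem_Ico (Set.Ioo_subset_Ico_self ht)]
  have hg' : IntervalIntegrable (fun t => g (2 - t)) volume 1 2 := by
    convert (hg.comp_sub_left 2).symm using 1 <;> norm_num
  rw [← intervalIntegral.integral_add_adjacent_intervals (hg.congr_uIoo hleft)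
      (hg'.congr_uIoo hright),
    ← intervalIntegral.integral_congr_uIoo hleft, ← intervalIntegral.integral_congr_uIoo hright,
    intervalIntegral.integral_comp_sub_left, two_smul]
  norm_num

lemma intervalAverage_comp_foldMap (hl : 0 < l) (hg : IntervalIntegrable g volume 0 1) :
    ⨍ t in 0..(2 / l : ℝ), g (foldMap l t) = ∫ x in 0..1, g x := by
  have hl' : (l : ℝ) ≠ 0 := by positivity
  have hscale : (2 / l : ℝ)⁻¹ * (l : ℝ)⁻¹ * 2 = 1 := by field_simp
  simp_rw [foldMap_eq_foldMap_one_mul l]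
  rw [interval_average_eq,
    intervalIntegral.integral_comp_mul_left (fun u => g (foldMap 1 u)) hl', mul_zero,
    mul_div_cancel₀ _ hl', integral_comp_foldMap_one hg, smul_smul, smul_smul, sub_zero,
    hscale, one_smul]

lemma norm_integral_comp_foldMap_smul_sub_le [CompleteSpace E] (hl : 0 < l) {f : ℝ → E}
    (hf : Integrable f) {ε : ℝ} (hε : ∀ s ∈ Set.Ioc 0 (2 / l : ℝ), ∫ x, ‖f (s + x) - f x‖ ≤ ε)
    {g : ℝ → ℝ} (hg : Measurable g) (hg1 : ∀ x, |g x| ≤ 1) :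
    ‖(∫ x, g (foldMap l x) • f x) - (∫ x in 0..1, g x) • ∫ x, f x‖ ≤ ε := by
  have hgint : IntervalIntegrable g volume 0 1 :=
    (intervalIntegrable_const (c := (1 : ℝ))).mono_fun hg.aestronglyMeasurable
      (.of_forall fun x => by simpa using hg1 x)
  rw [← intervalAverage_comp_foldMap hl hgint, ← one_mul ε]
  exact norm_integral_smul_sub_intervalAverage_smul_le (hg.comp (measurable_foldMap l))
    (fun x => hg1 _) ((periodic_foldMap hl).comp g) (by positivity) hf hε

lemma setIntegral_abs_rnDeriv_map_foldMap_sub_le {μ : Measure ℝ} [IsFiniteMeasure μ]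
    (hμ : μ ≪ volume) (hl : 0 < l) {ε : ℝ}
    (hε : ∀ s ∈ Set.Ioc 0 (2 / l : ℝ),
      ∫ x, ‖(μ.rnDeriv volume (s + x)).toReal - (μ.rnDeriv volume x).toReal‖ ≤ ε) :
    ∫ x in Set.Icc (0 : ℝ) 1,
      |((μ.map (foldMap l)).rnDeriv volume x).toReal - μ.real Set.univ| ≤ ε := by
  have hac : μ.map (foldMap l) ≪ volume :=
    (hμ.map (measurable_foldMap l)).trans (quasiMeasurePreserving_foldMap hl).absolutelyContinuous
  refine setIntegral_abs_rnDeriv_sub_le_of_forall_abs_le_one hac measurableSet_Icc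
    measure_Icc_lt_top.ne fun g hg hg1 => ?_
  have hmap : ∫ x, g x ∂(μ.map (foldMap l)) =
      ∫ x, g (foldMap l x) • (μ.rnDeriv volume x).toReal := by
    rw [integral_map (measurable_foldMap l).aemeasurable hg.aestronglyMeasurable,
      ← integral_rnDeriv_smul hμ]
    simp only [smul_eq_mul, mul_comm]
  have hbound := norm_integral_comp_foldMap_smul_sub_le hl
    (Measure.integrable_toReal_rnDeriv (μ := μ) (ν := volume)) hε hg hg1
  rw [← hmap, Measure.integral_toReal_rnDeriv hμ,
    intervalIntegral.integral_of_le zero_le_one, ← integral_Icc_eq_integral_Ioc,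
    smul_eq_mul, mul_comm] at hbound
  exact (le_abs_self _).trans hbound

end FoldMap

theorem foldMap_L1_convergence_general {μ : Measure ℝ} [IsFiniteMeasure μ] (hμ : μ ≪ volume) :
    Tendsto
      (fun l : ℕ => ∫ x in Set.Icc (0 : ℝ) 1,
        |((μ.map (foldMap l)).rnDeriv volume x).toReal - μ.real Set.univ|)
      atTop (𝓝 0) := by
  refine Metric.nhds_basis_closedBall.tendsto_right_iff.2 fun ε hε => ?_
  have htranslate := tendsto_integral_norm_vadd_sub (M := ℝ)
    (Measure.integrable_toReal_rnDeriv (μ := μ) (ν := volume))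
  obtain ⟨δ, hδ, hsmall⟩ := Metric.eventually_nhds_iff.1 (htranslate.eventually_le_const hε)
  have hperiod : ∀ᶠ l : ℕ in atTop, 2 / (l : ℝ) < δ :=
    (tendsto_const_div_atTop_nhds_zero_nat 2).eventually_lt_const hδ
  filter_upwards [hperiod, eventually_gt_atTop 0] with l hlδ hl
  rw [mem_closedBall_zero_iff, Real.norm_of_nonneg (integral_nonneg fun x => abs_nonneg _)]
  refine setIntegral_abs_rnDeriv_map_foldMap_sub_le hμ hl fun s hs => hsmall ?_
  rw [Real.dist_0_eq_abs, abs_of_pos hs.1]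
  exact hs.2.trans_lt hlδ

/-- For any probability density `p ∈ L¹[0,∞)`, the density `d_l` of
the pushforward under `K_l` of the measure with density `p` converges in `L¹[0,1]`
to the uniform density `1` as `l → ∞`. -/
theorem foldMap_L1_convergence
    (p : ℝ → ℝ) (hmeas : Measurable p) (hpos : ∀ x, 0 ≤ p x)
    (hsupp : ∀ x < (0 : ℝ), p x = 0)
    (hint : IntegrableOn p (Set.Ici (0 : ℝ)))
    (hnorm : ∫ x in Set.Ici (0 : ℝ), p x = 1) :
    Tendsto
      (fun l : ℕ => ∫ x in Set.Icc (0 : ℝ) 1,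
        |((((volume.withDensity (fun y => ENNReal.ofReal (p y))).map
            (foldMap l)).rnDeriv volume) x).toReal - 1|)
      atTop (𝓝 0) := by
  have := isProbabilityMeasure_withDensity_ofReal (s := Set.Ici 0) (.of_forall hpos)
    (fun x hx => hsupp x (not_le.1 hx)) hint hnorm
  simpa only [probReal_univ] using foldMap_L1_convergence_general
    (withDensity_absolutelyContinuous volume fun x => ENNReal.ofReal (p x))
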